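/- The B(G)-SSW is fully decomposable with respect to the cuts of G: let G = (V, E) be a finite connected simple graph with nonempty edge set and define, on the total space, W_{B(G)} = −⊗_{e∈E} Φ_e + Σ_{K ∈ B(G), K ≠ ∅} ( ⊗_{e∈K} (I_e − Φ_e)/(d−1) ⊗ ⊗_{e∉K} Φ_e ). Then for every nonempty K ∈ B(G) there exists a positive semidefinite matrix Q on the total space with Q^{Γ_K} ⪯ W_{B(G)}. -/

import Mathlib

open Matrix Finset
open scoped ComplexOrder

/-- The projector onto the maximally entangled state on `ℂ^d ⊗ ℂ^d`. -/
noncomputable def phiM (d : ℕ) : Matrix (Fin d × Fin d) (Fin d × Fin d) ℂ :=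
  Matrix.of fun p q => if p.1 = p.2 ∧ q.1 = q.2 then (1 : ℂ) / d else 0

/-- `Γ_K`: partial transpose of the first `ℂ^d` factor of every edge in `K`. -/
def ptK (d : ℕ) (E : Type*) [DecidableEq E] (K : Finset E)
    (M : Matrix (E → Fin d × Fin d) (E → Fin d × Fin d) ℂ) :
    Matrix (E → Fin d × Fin d) (E → Fin d × Fin d) ℂ :=
  Matrix.of fun x y =>
    M (fun e => if e ∈ K then ((y e).1, (x e).2) else x e)
      (fun e => if e ∈ K then ((x e).1, (y e).2) else y e)

/-- The edge boundary `∂S` of a vertex subset `S`, as a finite set of edges of `G`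
(the edges with exactly one endpoint in `S`). -/
def bdE {V : Type*} [Fintype V] [DecidableEq V] (G : SimpleGraph V) [DecidableRel G.Adj]
    (S : Finset V) : Finset ↥G.edgeSet :=
  Finset.univ.filter (fun e => (S.filter (fun v => v ∈ e.val)).card = 1)

/-- The cut space `B(G)`: the collection of all edge boundaries `∂S` for `S ⊆ V`. -/
def cutSpace {V : Type*} [Fintype V] [DecidableEq V] (G : SimpleGraph V)
    [DecidableRel G.Adj] : Finset (Finset ↥G.edgeSet) :=
  Finset.univ.filter (fun K => ∃ S : Finset V, K = bdE G S)

/-- The `B(G)`-SSW: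
`W_{B(G)} = −⊗_{e∈E} Φ_e + Σ_{∅ ≠ K ∈ B(G)} (⊗_{e∈K} (I_e − Φ_e)/(d−1) ⊗ ⊗_{e∉K} Φ_e)`. -/
noncomputable def WBG (d : ℕ) {V : Type*} [Fintype V] [DecidableEq V] (G : SimpleGraph V)
    [DecidableRel G.Adj] :
    Matrix (↥G.edgeSet → Fin d × Fin d) (↥G.edgeSet → Fin d × Fin d) ℂ :=
  (-1 : ℂ) • Matrix.of (fun x y => ∏ e, phiM d (x e) (y e))
    + ∑ K ∈ (cutSpace G).filter (fun K => K.Nonempty),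
        Matrix.of (fun x y => ∏ e,
          if e ∈ K then ((1 : Matrix (Fin d × Fin d) (Fin d × Fin d) ℂ) - phiM d) (x e) (y e)
              / ((d : ℂ) - 1)
          else phiM d (x e) (y e))

/-!
Put `Ψ = (I - Φ)/(d-1)` and `T_L = ⊗_{e∈L} Ψ_e ⊗ ⊗_{e∉L} Φ_e`, so that `W = ∑_L T_L - T_∅`. As
every `T_L` is positive semidefinite, `T_K - T_∅ ⪯ W`, and it is enough that `T_K - T_∅` has a
positive semidefinite partial transpose along `K`. With `F` the swap, `Φ^Γ = F/d` and
`Ψ^Γ = (I - F/d)/(d-1)`, so `-I ⪯ F ⪯ I` gives `-Ψ^Γ ⪯ Φ^Γ ⪯ Ψ^Γ` for `d ≥ 2`. Such two-sided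
bounds are preserved by tensor products, whence `T_∅^{Γ_K} ⪯ T_K^{Γ_K}`.
-/

open scoped MatrixOrder

section HadamardProduct

variable {ι m n R 𝕜 : Type*}

/-- The entrywise (Hadamard) product of a finite family of matrices. -/
def hadamardProd [CommMonoid R] (s : Finset ι) (A : ι → Matrix m n R) : Matrix m n R :=
  of fun x y => ∏ i ∈ s, A i x y

theorem hadamardProd_insert [DecidableEq ι] [CommMonoid R] {s : Finset ι} {i : ι} (hi : i ∉ s)
    (A : ι → Matrix m n R) : hadamardProd (insert i s) A = A i ⊙ hadamardProd s A := by
  ext x y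
  exact prod_insert hi

variable [RCLike 𝕜]

theorem hadamardProd_nonneg {s : Finset ι} {A : ι → Matrix n n 𝕜} (hA : ∀ i ∈ s, 0 ≤ A i) :
    0 ≤ hadamardProd s A := by
  classical
  simp only [nonneg_iff_posSemidef] at hA ⊢
  induction s using Finset.induction_on with
  | empty =>
    convert (PosSemidef.one : (1 : Matrix Unit Unit 𝕜).PosSemidef).submatrix fun _ : n => () using 1
    ext
    simp [hadamardProd]
  | insert i s hi ih =>
    rw [hadamardProd_insert hi]
    exact (hA i (mem_insert_self i s)).hadamard (ih fun j hj => hA j (mem_insert_of_mem hj))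

/- The identities `2 (A₁ ⊙ A₂ ± B₁ ⊙ B₂) = (A₁ + B₁) ⊙ (A₂ ± B₂) + (A₁ - B₁) ⊙ (A₂ ∓ B₂)` reduce
this to the Schur product theorem. -/
theorem hadamard_mem_Icc {A₁ A₂ B₁ B₂ : Matrix n n 𝕜} (hB₁ : B₁ ∈ Set.Icc (-A₁) A₁)
    (hB₂ : B₂ ∈ Set.Icc (-A₂) A₂) : B₁ ⊙ B₂ ∈ Set.Icc (-(A₁ ⊙ A₂)) (A₁ ⊙ A₂) := by
  have half_nonneg : (0 : 𝕜) ≤ 2⁻¹ := by positivity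
  obtain ⟨hplus₁, hminus₁⟩ := hB₁
  obtain ⟨hplus₂, hminus₂⟩ := hB₂
  rw [le_iff] at hplus₁ hminus₁ hplus₂ hminus₂
  constructor <;> rw [le_iff]
  · convert ((hplus₁.hadamard hplus₂).add (hminus₁.hadamard hminus₂)).smul half_nonneg using 1
    ext x y
    simp only [Matrix.sub_apply, Matrix.neg_apply, Matrix.add_apply, Matrix.smul_apply,
      hadamard_apply, smul_eq_mul]
    ring
  · convert ((hplus₁.hadamard hminus₂).add (hminus₁.hadamard hplus₂)).smul half_nonneg using 1
    ext x y
    simp only [Matrix.sub_apply, Matrix.neg_apply, Matrix.add_apply, Matrix.smul_apply,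
      hadamard_apply, smul_eq_mul]
    ring

theorem hadamardProd_mem_Icc {s : Finset ι} {A B : ι → Matrix n n 𝕜}
    (hB : ∀ i ∈ s, B i ∈ Set.Icc (-A i) (A i)) :
    hadamardProd s B ∈ Set.Icc (-hadamardProd s A) (hadamardProd s A) := by
  classical
  induction s using Finset.induction_on with
  | empty =>
    have h : 0 ≤ hadamardProd ∅ A := hadamardProd_nonneg (by simp)
    exact ⟨(neg_nonpos.2 h).trans h, le_rfl⟩
  | insert i s hi ih =>
    simp only [hadamardProd_insert hi]
    exact hadamard_mem_Icc (hB i (mem_insert_self i s)) (ih fun j hj => hB j (mem_insert_of_mem hj))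

end HadamardProduct

section PiKronecker

variable {ι R 𝕜 : Type*} [Fintype ι] {m n : ι → Type*}

/-- The tensor product `⨂ i, M i` of a finite family of matrices; its rows and columns are indexed
by tuples of row and column indices. -/
def piKronecker [CommMonoid R] (M : ∀ i, Matrix (m i) (n i) R) :
    Matrix (∀ i, m i) (∀ i, n i) R :=
  of fun x y => ∏ i, M i (x i) (y i)

theorem piKronecker_eq_hadamardProd [CommMonoid R] (M : ∀ i, Matrix (m i) (n i) R) :
    piKronecker M = hadamardProd univ fun i => (M i).submatrix (· i) (· i) :=
  rfl

variable [RCLike 𝕜]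

theorem piKronecker_nonneg {A : ∀ i, Matrix (n i) (n i) 𝕜} (hA : ∀ i, 0 ≤ A i) :
    0 ≤ piKronecker A := by
  simp only [nonneg_iff_posSemidef] at hA
  exact hadamardProd_nonneg fun i _ => nonneg_iff_posSemidef.2 ((hA i).submatrix _)

theorem piKronecker_mem_Icc {A B : ∀ i, Matrix (n i) (n i) 𝕜}
    (hB : ∀ i, B i ∈ Set.Icc (-A i) (A i)) :
    piKronecker B ∈ Set.Icc (-piKronecker A) (piKronecker A) := by
  simp only [piKronecker_eq_hadamardProd]
  exact hadamardProd_mem_Icc fun i _ =>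
    ⟨(le_iff.1 (hB i).1).submatrix _, (le_iff.1 (hB i).2).submatrix _⟩

end PiKronecker

section PartialTranspose

variable {l m n p R : Type*}

/-- The partial transpose of a matrix on a twofold tensor product, on the first factor. -/
def partialTranspose (M : Matrix (l × n) (m × p) R) : Matrix (m × n) (l × p) R :=
  of fun x y => M (y.1, x.2) (x.1, y.2)

theorem partialTranspose_one [DecidableEq m] [DecidableEq n] [Zero R] [One R] :
    partialTranspose (1 : Matrix (m × n) (m × n) R) = 1 := by
  ext x y
  simp only [partialTranspose, of_apply, one_apply, Prod.ext_iff, eq_comm]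

variable {d : ℕ} {E : Type*} [DecidableEq E]

theorem ptK_involutive (K : Finset E) : Function.Involutive (ptK d E K) := by
  intro M
  ext x y
  simp only [ptK, of_apply]
  congr 1 <;> funext e <;> split_ifs <;> rfl

theorem ptK_sub (K : Finset E) (A B : Matrix (E → Fin d × Fin d) (E → Fin d × Fin d) ℂ) :
    ptK d E K (A - B) = ptK d E K A - ptK d E K B :=
  rfl

theorem ptK_piKronecker [Fintype E] (K : Finset E)
    (M : E → Matrix (Fin d × Fin d) (Fin d × Fin d) ℂ) :
    ptK d E K (piKronecker M) =
      piKronecker fun e => if e ∈ K then partialTranspose (M e) else M e := by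
  ext x y
  refine prod_congr rfl fun e _ => ?_
  by_cases he : e ∈ K <;> simp [he, partialTranspose]

end PartialTranspose

section MaximallyEntangled

theorem le_one_of_isHermitian_of_mul_self_eq_one {n 𝕜 : Type*} [RCLike 𝕜] [Fintype n]
    [DecidableEq n] {A : Matrix n n 𝕜} (hA : A.IsHermitian) (hAA : A * A = 1) : A ≤ 1 := by
  have half_nonneg : (0 : 𝕜) ≤ 2⁻¹ := by positivity
  have hsq : (1 - A)ᴴ * (1 - A) = (2 : 𝕜) • (1 - A) := by
    rw [conjTranspose_sub, conjTranspose_one, hA.eq, sub_mul, mul_sub, mul_sub, hAA]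
    simp only [one_mul, mul_one]
    module
  have h := (posSemidef_conjTranspose_mul_self (1 - A)).smul half_nonneg
  rwa [hsq, inv_smul_smul₀ two_ne_zero] at h

variable (d : ℕ)

/-- The swap operator `F (u ⊗ v) = v ⊗ u` on `ℂ^d ⊗ ℂ^d`. -/
abbrev swapMatrix : Matrix (Fin d × Fin d) (Fin d × Fin d) ℂ :=
  Equiv.Perm.permMatrix ℂ (Equiv.prodComm (Fin d) (Fin d))

theorem swapMatrix_mem_Icc : swapMatrix d ∈ Set.Icc (-1) 1 := by
  have isHermitian : (swapMatrix d).IsHermitian := conjTranspose_permMatrix _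
  have mul_self : swapMatrix d * swapMatrix d = 1 := by
    rw [← permMatrix_mul, ← permMatrix_one]
    rfl
  refine ⟨neg_le.1 ?_, le_one_of_isHermitian_of_mul_self_eq_one isHermitian mul_self⟩
  exact le_one_of_isHermitian_of_mul_self_eq_one isHermitian.neg (by rw [neg_mul_neg, mul_self])

theorem isStarProjection_phiM : IsStarProjection (phiM d) where
  isIdempotentElem := by
    ext p q
    have hd : (d : ℂ) ≠ 0 := Nat.cast_ne_zero.2 p.1.pos.ne'
    simp only [phiM, mul_apply, of_apply, Fintype.sum_prod_type]
    by_cases hp : p.1 = p.2 <;> by_cases hq : q.1 = q.2 <;> simp [hp, hq, hd]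
  isSelfAdjoint := by
    ext p q
    simp [phiM, star_apply, and_comm, apply_ite (star : ℂ → ℂ)]

/-- The matrix `(I - Φ)/(d-1)`: the projector complementary to `Φ`, scaled so that its partial
transpose dominates that of `Φ`. For `d = 1` it is `0`. -/
noncomputable def scaledComplPhiM : Matrix (Fin d × Fin d) (Fin d × Fin d) ℂ :=
  ((d : ℂ) - 1)⁻¹ • (1 - phiM d)

theorem partialTranspose_phiM : partialTranspose (phiM d) = (d : ℂ)⁻¹ • swapMatrix d := by
  ext x y
  simp [partialTranspose, phiM, PEquiv.toMatrix_apply, Prod.ext_iff, and_comm, eq_comm]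

theorem partialTranspose_scaledComplPhiM :
    partialTranspose (scaledComplPhiM d) = ((d : ℂ) - 1)⁻¹ • (1 - (d : ℂ)⁻¹ • swapMatrix d) := by
  rw [← partialTranspose_phiM, ← partialTranspose_one]
  rfl

variable {d}

theorem inv_natCast_sub_one_nonneg (hd : 1 ≤ d) : 0 ≤ ((d : ℂ) - 1)⁻¹ := by
  rw [← Nat.cast_pred hd]
  positivity

theorem scaledComplPhiM_nonneg (hd : 1 ≤ d) : 0 ≤ scaledComplPhiM d :=
  smul_nonneg (inv_natCast_sub_one_nonneg hd) (isStarProjection_phiM d).one_sub_nonneg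

theorem partialTranspose_phiM_mem_Icc (hd : 2 ≤ d) :
    partialTranspose (phiM d) ∈
      Set.Icc (-partialTranspose (scaledComplPhiM d)) (partialTranspose (scaledComplPhiM d)) := by
  have hd₀ : (d : ℂ) ≠ 0 := by norm_cast; lia
  have hd₁ : (d : ℂ) - 1 ≠ 0 := sub_ne_zero.2 (by norm_cast; lia)
  have hinv : 0 ≤ ((d : ℂ) - 1)⁻¹ := inv_natCast_sub_one_nonneg (one_le_two.trans hd)
  obtain ⟨neg_one_le_swap, swap_le_one⟩ := swapMatrix_mem_Icc d
  rw [partialTranspose_phiM, partialTranspose_scaledComplPhiM]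
  constructor <;> rw [← sub_nonneg]
  · have hcoeff : 0 ≤ ((d - 2 : ℕ) : ℂ) * (d : ℂ)⁻¹ := by positivity
    have htwo : 0 ≤ 2 * (d : ℂ)⁻¹ := by positivity
    calc
      0 ≤ ((d : ℂ) - 1)⁻¹ • ((((d - 2 : ℕ) : ℂ) * (d : ℂ)⁻¹) • (swapMatrix d - -1) +
            (2 * (d : ℂ)⁻¹) • 1) :=
        smul_nonneg hinv <| add_nonneg (smul_nonneg hcoeff (sub_nonneg.2 neg_one_le_swap))
          (smul_nonneg htwo zero_le_one)
      _ = (d : ℂ)⁻¹ • swapMatrix d - -(((d : ℂ) - 1)⁻¹ • (1 - (d : ℂ)⁻¹ • swapMatrix d)) := by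
        rw [Nat.cast_sub hd]
        match_scalars <;> field_simp <;> ring
  · calc
      0 ≤ ((d : ℂ) - 1)⁻¹ • (1 - swapMatrix d) := smul_nonneg hinv (sub_nonneg.2 swap_le_one)
      _ = ((d : ℂ) - 1)⁻¹ • (1 - (d : ℂ)⁻¹ • swapMatrix d) - (d : ℂ)⁻¹ • swapMatrix d := by
        match_scalars <;> field_simp
        ring

end MaximallyEntangled

section Witness

variable (d : ℕ) {E : Type*} [Fintype E] [DecidableEq E]

/-- The matrix `⊗_{e∈K} (I_e − Φ_e)/(d−1) ⊗ ⊗_{e∉K} Φ_e`; for `K = ∅` it is `⊗_{e∈E} Φ_e`. -/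
noncomputable def sswTerm (K : Finset E) : Matrix (E → Fin d × Fin d) (E → Fin d × Fin d) ℂ :=
  piKronecker fun e => if e ∈ K then scaledComplPhiM d else phiM d

/-- The analogue of `WBG` for an arbitrary family `𝓢` of subsets of a finite set `E`. The sum runs
over all of `𝓢`, so the empty set has to be removed from a family such as the cut space. -/
noncomputable def ssw (𝓢 : Finset (Finset E)) :
    Matrix (E → Fin d × Fin d) (E → Fin d × Fin d) ℂ :=
  ∑ K ∈ 𝓢, sswTerm d K - sswTerm d ∅

theorem WBG_eq_ssw {V : Type*} [Fintype V] [DecidableEq V] (G : SimpleGraph V)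
    [DecidableRel G.Adj] : WBG d G = ssw d {K ∈ cutSpace G | K.Nonempty} := by
  rw [WBG, ssw, neg_one_smul, neg_add_eq_sub]
  congr 1
  refine sum_congr rfl fun K _ => ?_
  ext x y
  refine prod_congr rfl fun e _ => ?_
  by_cases he : e ∈ K <;> simp [he, scaledComplPhiM, div_eq_inv_mul]

variable {d}

theorem sswTerm_nonneg (hd : 1 ≤ d) (K : Finset E) : 0 ≤ sswTerm d K := by
  refine piKronecker_nonneg fun e => ?_
  split_ifs
  · exact scaledComplPhiM_nonneg hd
  · exact (isStarProjection_phiM d).nonneg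

theorem sswTerm_sub_sswTerm_empty_le_ssw (hd : 1 ≤ d) {𝓢 : Finset (Finset E)} {K : Finset E}
    (hK : K ∈ 𝓢) : sswTerm d K - sswTerm d ∅ ≤ ssw d 𝓢 :=
  sub_le_sub_right (single_le_sum (fun L _ => sswTerm_nonneg hd L) hK) _

theorem ptK_sswTerm_empty_le_ptK_sswTerm (hd : 2 ≤ d) (K : Finset E) :
    ptK d E K (sswTerm d ∅) ≤ ptK d E K (sswTerm d K) := by
  simp only [sswTerm, ptK_piKronecker]
  refine (piKronecker_mem_Icc fun e => ?_).2
  by_cases he : e ∈ K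
  · simpa [he] using partialTranspose_phiM_mem_Icc hd
  · have hphi : 0 ≤ phiM d := (isStarProjection_phiM d).nonneg
    simpa [he] using (neg_nonpos.2 hphi).trans hphi

theorem stmt_11_general (hd : 2 ≤ d) {𝓢 : Finset (Finset E)} {K : Finset E} (hK : K ∈ 𝓢) :
    ∃ Q : Matrix (E → Fin d × Fin d) (E → Fin d × Fin d) ℂ,
      Q.PosSemidef ∧ (ssw d 𝓢 - ptK d E K Q).PosSemidef := by
  refine ⟨ptK d E K (sswTerm d K - sswTerm d ∅), ?_, ?_⟩
  · rw [ptK_sub]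
    exact le_iff.1 (ptK_sswTerm_empty_le_ptK_sswTerm hd K)
  · rw [ptK_involutive]
    exact le_iff.1 (sswTerm_sub_sswTerm_empty_le_ssw (one_le_two.trans hd) hK)

end Witness

/-- The `B(G)`-SSW is fully decomposable with respect to the cuts of `G`:
for every nonempty cut `K ∈ B(G)` there is a positive semidefinite `Q` with
`Q^{Γ_K} ⪯ W_{B(G)}`. -/
theorem stmt_11 (d : ℕ) (hd : 2 ≤ d) (V : Type*) [Fintype V] [DecidableEq V]
    (G : SimpleGraph V) [DecidableRel G.Adj] (hconn : G.Connected)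
    (hE : G.edgeSet.Nonempty) (K : Finset ↥G.edgeSet)
    (hK : K ∈ cutSpace G) (hKne : K.Nonempty) :
    ∃ Q : Matrix (↥G.edgeSet → Fin d × Fin d) (↥G.edgeSet → Fin d × Fin d) ℂ,
      Q.PosSemidef ∧ (WBG d G - ptK d ↥G.edgeSet K Q).PosSemidef := by
  rw [WBG_eq_ssw]
  exact stmt_11_general hd (mem_filter.2 ⟨hK, hKne⟩)
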